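/- The set of codes of pairs (R, t), where R is a finite term rewriting system over a finite signature and t is a ground term over that signature such that R is confluent on t, is Π⁰₂-complete. -/

import Mathlib

/-!
A reduction `t →* u` is determined by a finite list of triples (context, rule, substitution), where
a substitution may be taken to be a finite list of terms (`Term.reduces_iff`). The coding of terms
is a bijection onto `ℕ`, and structural recursion on terms is course-of-values recursion on codes
(`Term.primrec_fold`), so executing such a list is primitive recursive, as are well-formedness and
groundness. Confluence on `t` then reads as: for any two lists of steps from `t` there are two lists
of steps that join the results, which is `Π⁰₂` (`pi02_crSet`).

For hardness, a fixed system interprets Mathlib's `Turing.ToPartrec.Code`: codes, continuations and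
lists of numbers are constructor terms, and rewriting a configuration is running a deterministic
machine (`Machine.cfgT_rewrite`). In addition, from the initial term `tStart c n` one can guess an
arbitrary number `x` and start running `c` on `[n, x]`, or stop at once in the normal form `tDone`;
a run of `c` that halts also ends in `tDone`. So `tStart c n` is confluent exactly when `c` halts
on `[n, x]` for all `x` (`Machine.crOn_tStart`). Given a computable `p`, let `c` search for `y` with
`p n x y`; then the set of `n` with `∀ x, ∃ y, p n x y` reduces to confluence by
`n ↦ (rules, tStart c n)`.
-/

/-- First-order terms over the fixed countably infinite set of variables
(named by naturals): a term is a variable or a function symbol (named by a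
natural number) applied to a list of argument terms. -/
inductive Term : Type
  | var : ℕ → Term
  | app : ℕ → List Term → Term

namespace Term

/-- Homomorphic application of a substitution (a map from variables to terms). -/
def subst (σ : ℕ → Term) : Term → Term
  | var n => σ n
  | app f ts => app f (ts.attach.map (fun x => subst σ x.1))
decreasing_by
  have := List.sizeOf_lt_of_mem x.2
  simp only [Term.app.sizeOf_spec]; omega

/-- An injective encoding of terms into the natural numbers. -/
def encode : Term → ℕ
  | var n => Nat.pair 0 n
  | app f ts => Nat.pair (f + 1) (Encodable.encode (ts.attach.map (fun x => encode x.1)))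
decreasing_by
  have := List.sizeOf_lt_of_mem x.2
  simp only [Term.app.sizeOf_spec]; omega

end Term

/-- `IsVarOf n t` holds iff the variable `n` occurs in the term `t`. -/
inductive IsVarOf (n : ℕ) : Term → Prop
  | var : IsVarOf n (.var n)
  | app {f : ℕ} {ts : List Term} {t : Term} : t ∈ ts → IsVarOf n t → IsVarOf n (.app f ts)

/-- A term is ground if no variable occurs in it. -/
def Ground (t : Term) : Prop := ∀ n : ℕ, ¬ IsVarOf n t

/-- A (finite) signature is presented by a finite list of pairs
(function symbol, arity); `WFSig` states that each symbol has a unique arity. -/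
def WFSig (sig : List (ℕ × ℕ)) : Prop :=
  ∀ p ∈ sig, ∀ q ∈ sig, p.1 = q.1 → p.2 = q.2

/-- `WFTerm sig t`: `t` is a term over the signature `sig`, i.e. every function
symbol occurring in `t` belongs to `sig` and is applied to the correct number
of arguments. -/
inductive WFTerm (sig : List (ℕ × ℕ)) : Term → Prop
  | var (n : ℕ) : WFTerm sig (.var n)
  | app {f : ℕ} {ts : List Term} : (f, ts.length) ∈ sig →
      (∀ t ∈ ts, WFTerm sig t) → WFTerm sig (.app f ts)

/-- `WFTRS sig R`: the finite list of rules `R` is a term rewriting system over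
the signature `sig`: `sig` assigns unique arities, both sides of every rule are
terms over `sig`, no left-hand side is a variable, and every variable occurring
in a right-hand side occurs in the corresponding left-hand side. -/
def WFTRS (sig : List (ℕ × ℕ)) (R : List (Term × Term)) : Prop :=
  WFSig sig ∧ ∀ p ∈ R, WFTerm sig p.1 ∧ WFTerm sig p.2 ∧
    (∀ n : ℕ, p.1 ≠ .var n) ∧ (∀ n : ℕ, IsVarOf n p.2 → IsVarOf n p.1)

/-- The one-step rewrite relation `→_R` of a TRS `R`: application of a rule
under a substitution, closed under arbitrary one-hole contexts (i.e. embedded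
at any argument position at any depth). -/
inductive Rewrite (R : List (Term × Term)) : Term → Term → Prop
  | rule (l r : Term) (σ : ℕ → Term) (h : (l, r) ∈ R) :
      Rewrite R (l.subst σ) (r.subst σ)
  | congr (f : ℕ) (ts₁ ts₂ : List Term) (t t' : Term) (h : Rewrite R t t') :
      Rewrite R (.app f (ts₁ ++ t :: ts₂)) (.app f (ts₁ ++ t' :: ts₂))

/-- Many-step rewriting `→*_R` (reflexive-transitive closure of `→_R`). -/
def Reduces (R : List (Term × Term)) : Term → Term → Prop :=
  Relation.ReflTransGen (Rewrite R)

/-- `t` is a normal form of `R` (admits no `→_R`-step). -/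
def NormalForm (R : List (Term × Term)) (t : Term) : Prop := ∀ u : Term, ¬ Rewrite R t u

/-- `R` is strongly normalizing (terminating) on `t`:
no infinite rewrite sequence starts at `t`. -/
def SNon (R : List (Term × Term)) (t : Term) : Prop :=
  ¬ ∃ f : ℕ → Term, f 0 = t ∧ ∀ n : ℕ, Rewrite R (f n) (f (n + 1))

/-- `R` is weakly normalizing on `t`: some reduction from `t` ends in a normal form. -/
def WNon (R : List (Term × Term)) (t : Term) : Prop :=
  ∃ s : Term, Reduces R t s ∧ NormalForm R s

/-- `R` is confluent (Church-Rosser) on `t`. -/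
def CRon (R : List (Term × Term)) (t : Term) : Prop :=
  ∀ t₁ t₂ : Term, Reduces R t t₁ → Reduces R t t₂ →
    ∃ d : Term, Reduces R t₁ d ∧ Reduces R t₂ d

/-- `R` is weakly confluent (weakly Church-Rosser) on `t`. -/
def WCRon (R : List (Term × Term)) (t : Term) : Prop :=
  ∀ t₁ t₂ : Term, Rewrite R t t₁ → Rewrite R t t₂ →
    ∃ d : Term, Reduces R t₁ d ∧ Reduces R t₂ d

/-- A root step `s →_{R,ε} t`: `s = ℓσ` and `t = rσ` for some rule `ℓ → r` of `R`. -/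
def RootStep (R : List (Term × Term)) (s t : Term) : Prop :=
  ∃ (l r : Term) (σ : ℕ → Term), (l, r) ∈ R ∧ s = l.subst σ ∧ t = r.subst σ

/-- Code of a rewrite rule. -/
def encodeRule (p : Term × Term) : ℕ := Nat.pair p.1.encode p.2.encode

/-- Code of a finite TRS. -/
def encodeTRS (R : List (Term × Term)) : ℕ := Encodable.encode (R.map encodeRule)

/-- Code of a finite signature. -/
def encodeSig (sig : List (ℕ × ℕ)) : ℕ := Encodable.encode sig

/-- A set `A ⊆ ℕ` is Σ⁰₁ (recursively enumerable) if it is the domain of a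
partial computable function. -/
def Sigma01 (A : Set ℕ) : Prop :=
  ∃ f : ℕ →. ℕ, Nat.Partrec f ∧ ∀ n : ℕ, n ∈ A ↔ (f n).Dom

/-- `B` is many-one reducible to `A`: there is a total computable `g` with
`n ∈ B ↔ g n ∈ A` for all `n`. -/
def ManyOneRed (B A : Set ℕ) : Prop :=
  ∃ g : ℕ → ℕ, Computable g ∧ ∀ n : ℕ, n ∈ B ↔ g n ∈ A

/-- `A` is Σ⁰₁-complete. -/
def Sigma01Complete (A : Set ℕ) : Prop :=
  Sigma01 A ∧ ∀ B : Set ℕ, Sigma01 B → ManyOneRed B A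

/-- A set `A ⊆ ℕ` is Π⁰₂ if there is a decidable (computable) predicate
`P ⊆ ℕ³` with `n ∈ A ↔ ∀ x ∃ y, P n x y`. -/
def Pi02 (A : Set ℕ) : Prop :=
  ∃ p : ℕ → ℕ → ℕ → Bool,
    Computable (fun x : ℕ × ℕ × ℕ => p x.1 x.2.1 x.2.2) ∧
    ∀ n : ℕ, n ∈ A ↔ ∀ x : ℕ, ∃ y : ℕ, p n x y = true

/-- `A` is Π⁰₂-complete. -/
def Pi02Complete (A : Set ℕ) : Prop :=
  Pi02 A ∧ ∀ B : Set ℕ, Pi02 B → ManyOneRed B A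

/-- A set `A ⊆ ℕ` is Π¹₁ if there is a decidable (computable) predicate
`P ⊆ ℕ²` such that `n ∈ A` iff for every function `α : ℕ → ℕ` there exists
`k` with `P n ⟨α 0, …, α (k-1)⟩`, where `⟨·⟩` is the (computable) coding of
finite sequences of naturals. -/
def Pi11 (A : Set ℕ) : Prop :=
  ∃ p : ℕ → ℕ → Bool,
    Computable (fun x : ℕ × ℕ => p x.1 x.2) ∧
    ∀ n : ℕ, n ∈ A ↔ ∀ α : ℕ → ℕ, ∃ k : ℕ,
      p n (Encodable.encode (List.ofFn (fun i : Fin k => α i))) = true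

/-- `A` is Π¹₁-complete. -/
def Pi11Complete (A : Set ℕ) : Prop :=
  Pi11 A ∧ ∀ B : Set ℕ, Pi11 B → ManyOneRed B A

/-! ### Terms as a primitive recursive data type -/

namespace Term

/-- Induction on terms with the hypothesis for all immediate subterms. -/
theorem ind {P : Term → Prop} (hv : ∀ n, P (var n))
    (ha : ∀ f ts, (∀ t ∈ ts, P t) → P (app f ts)) : ∀ t, P t
  | var n => hv n
  | app f ts => ha f ts fun t _ => ind hv ha t

@[simp] theorem subst_var (σ : ℕ → Term) (n : ℕ) : (var n).subst σ = σ n := by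
  rw [subst]

@[simp] theorem subst_app (σ : ℕ → Term) (f : ℕ) (ts : List Term) :
    (app f ts).subst σ = app f (ts.map (subst σ)) := by
  rw [subst]; simp

theorem encode_var (n : ℕ) : (var n).encode = Nat.pair 0 n := by rw [Term.encode]

theorem encode_app (f : ℕ) (ts : List Term) :
    (app f ts).encode = Nat.pair (f + 1) (Encodable.encode (ts.map Term.encode)) := by
  rw [Term.encode]; simp

theorem encode_injective : Function.Injective Term.encode := by
  intro s
  induction s using ind with
  | hv n =>
    intro t h
    cases t with
    | var m => simp [encode_var] at h; rw [h]
    | app f ts => simp [encode_var, encode_app] at h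
  | ha f ts ih =>
    intro t h
    cases t with
    | var m => simp [encode_var, encode_app] at h
    | app g us =>
      simp only [encode_app, Nat.pair_eq_pair, Nat.add_right_cancel_iff,
        Encodable.encode_inj] at h
      obtain ⟨rfl, h⟩ := h
      congr 1
      clear * - ih h
      induction ts generalizing us with
      | nil => simpa using h.symm
      | cons a l hl =>
        cases us with
        | nil => simp at h
        | cons b m =>
          simp only [List.map_cons, List.cons.injEq] at h
          rw [ih a (by simp) h.1, hl (fun t ht => ih t (by simp [ht])) m h.2]

theorem lt_encode_of_mem {a : ℕ} {l : List ℕ} (h : a ∈ l) : a < Encodable.encode l := by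
  induction l with
  | nil => simp at h
  | cons b l ih =>
    rw [Encodable.encode_list_cons]
    rcases List.mem_cons.1 h with rfl | h
    · exact Nat.lt_succ_of_le (Nat.left_le_pair _ _)
    · exact (ih h).trans_le ((Nat.right_le_pair _ _).trans (Nat.le_succ _))

theorem encode_surjective : Function.Surjective Term.encode := by
  intro n
  induction n using Nat.strong_induction_on with
  | _ n ih =>
    obtain ⟨i, b, rfl⟩ : ∃ i b, n = Nat.pair i b := ⟨_, _, (Nat.pair_unpair n).symm⟩
    cases i with
    | zero => exact ⟨var b, encode_var b⟩
    | succ f =>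
      obtain ⟨l, rfl⟩ : ∃ l : List ℕ, b = Encodable.encode l :=
        ⟨Denumerable.ofNat (List ℕ) b, by simp⟩
      have : ∃ ts : List Term, ts.map Term.encode = l := by
        have hl : ∀ a ∈ l, ∃ t, Term.encode t = a := fun a ha =>
          ih a ((lt_encode_of_mem ha).trans_le (Nat.right_le_pair _ _))
        clear ih
        induction l with
        | nil => exact ⟨[], rfl⟩
        | cons a l hi =>
          obtain ⟨t, ht⟩ := hl a (by simp)
          obtain ⟨ts, hts⟩ := hi fun a ha => hl a (by simp [ha])
          exact ⟨t :: ts, by simp [ht, hts]⟩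
      obtain ⟨ts, hts⟩ := this
      exact ⟨app f ts, by rw [encode_app, hts]⟩

/-- The coding of terms is a bijection with `ℕ`, so terms form a denumerable type whose
`Encodable.encode` is `Term.encode`. -/
noncomputable instance : Denumerable Term :=
  Denumerable.mk' (Equiv.ofBijective Term.encode ⟨encode_injective, encode_surjective⟩)

theorem encode_eq (t : Term) : Encodable.encode t = t.encode := rfl

theorem encode_list_eq (ts : List Term) :
    Encodable.encode ts = Encodable.encode (ts.map Term.encode) := by
  induction ts with
  | nil => rfl
  | cons t ts ih => simp [ih, encode_eq]

theorem primrec_var : Primrec Term.var := by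
  rw [← Primrec.encode_iff]
  simp only [encode_eq, encode_var]
  exact Primrec₂.natPair.comp (.const 0) .id

theorem primrec_app : Primrec₂ Term.app := by
  rw [Primrec₂, ← Primrec.encode_iff]
  simp only [encode_eq, encode_app, ← encode_list_eq]
  exact Primrec₂.natPair.comp (Primrec.succ.comp .fst) (Primrec.encode.comp .snd)

/-- Structural recursion on terms, with value `v n` at the variable `n` and with `a f` combining the
values of the arguments of `f`. -/
def fold {β : Type} (v : ℕ → β) (a : ℕ → List β → β) : Term → β
  | var n => v n
  | app f ts => a f (ts.attach.map (fun x => fold v a x.1))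
decreasing_by
  have := List.sizeOf_lt_of_mem x.2
  simp only [Term.app.sizeOf_spec]; omega

@[simp] theorem fold_var {β : Type} (v : ℕ → β) (a : ℕ → List β → β) (n : ℕ) :
    (var n).fold v a = v n := by rw [fold]

@[simp] theorem fold_app {β : Type} (v : ℕ → β) (a : ℕ → List β → β) (f : ℕ) (ts : List Term) :
    (app f ts).fold v a = a f (ts.map (fold v a)) := by rw [fold]; simp

/-- Iteration along terms is primitive recursive: it is course-of-values recursion on codes,
because the code of a subterm is smaller than the code of the term. -/
theorem primrec_fold {α β : Type} [Primcodable α] [Primcodable β]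
    {v : α → ℕ → β} {a : α → ℕ → List β → β}
    (hv : Primrec₂ v) (ha : Primrec fun x : α × ℕ × List β => a x.1 x.2.1 x.2.2) :
    Primrec₂ fun (x : α) (t : Term) => t.fold (v x) (a x) := by
  let F : α → ℕ → β := fun x n => (Denumerable.ofNat Term n).fold (v x) (a x)
  let g : α → List β → Option β := fun x L =>
    bif L.length.unpair.1 == 0 then some (v x L.length.unpair.2)
    else some (a x L.length.unpair.1.pred
      ((Denumerable.ofNat (List ℕ) L.length.unpair.2).map
        fun c => (L[c]?).getD (v x 0)))
  have hg : Primrec₂ g := by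
    have hlen : Primrec fun p : α × List β => p.2.length.unpair :=
      Primrec.unpair.comp (Primrec.list_length.comp .snd)
    refine Primrec.cond ?_ ?_ ?_
    · exact Primrec.beq.comp (Primrec.fst.comp hlen) (.const 0)
    · exact Primrec.option_some.comp (hv.comp .fst (Primrec.snd.comp hlen))
    · refine Primrec.option_some.comp (ha.comp (.pair .fst (.pair
        (Primrec.pred.comp (Primrec.fst.comp hlen)) ?_)))
      refine Primrec.list_map ((Primrec.ofNat (List ℕ)).comp (Primrec.snd.comp hlen)) ?_
      exact Primrec.option_getD.comp
        (Primrec.list_getElem?.comp (Primrec.snd.comp .fst) .snd)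
        (hv.comp (Primrec.fst.comp .fst) (.const 0))
  have hF : Primrec₂ F := by
    refine Primrec.nat_strong_rec F hg fun x n => ?_
    obtain ⟨t, rfl⟩ := encode_surjective n
    have hofNat : ∀ t : Term, Denumerable.ofNat Term t.encode = t := fun t =>
      Denumerable.ofNat_encode t
    simp only [g, F, List.length_map, List.length_range, hofNat]
    cases t with
    | var n => simp [encode_var]
    | app f ts =>
      simp only [encode_app, Nat.unpair_pair, fold_app]
      have : (f + 1 == 0) = false := by simp
      simp only [this, cond_false, Nat.pred_succ,
        Denumerable.ofNat_encode, List.map_map, Option.some.injEq]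
      congr 1
      refine List.map_congr_left fun t ht => ?_
      have hlt : t.encode < Nat.pair (f + 1) (Encodable.encode (ts.map Term.encode)) :=
        (lt_encode_of_mem (List.mem_map_of_mem ht)).trans_le (Nat.right_le_pair _ _)
      simp [List.getElem?_range hlt, hofNat]
  refine (hF.comp (α := α × Term) Primrec.fst (Primrec.encode.comp .snd)).of_eq fun p => ?_
  simp [F]

end Term

/-! ### Decidability of the syntactic conditions -/

namespace Term

/-- The list of variables occurring in a term. -/
def vars (t : Term) : List ℕ := t.fold (fun n => [n]) (fun _ ls => ls.flatten)

theorem isVarOf_iff (n : ℕ) (t : Term) : IsVarOf n t ↔ n ∈ t.vars := by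
  induction t using ind with
  | hv m =>
    simp only [vars, fold_var, List.mem_singleton]
    constructor
    · rintro ⟨⟩; rfl
    · rintro rfl; exact .var
  | ha f ts ih =>
    simp only [vars, fold_app, List.mem_flatten, List.mem_map, exists_exists_and_eq_and]
    constructor
    · rintro (_ | ⟨ht, h⟩); exact ⟨_, ht, (ih _ ht).1 h⟩
    · rintro ⟨t, ht, h⟩; exact .app ht ((ih t ht).2 h)

theorem primrec_vars : Primrec vars :=
  (primrec_fold (α := Unit) (v := fun _ n => [n]) (a := fun _ _ ls => ls.flatten)
    (Primrec.list_cons.comp .snd (.const []))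
    (Primrec.list_flatten.comp (Primrec.snd.comp .snd))).comp (.const ()) .id

/-- Boolean version of `WFTerm`. -/
def wfb (sig : List (ℕ × ℕ)) (t : Term) : Bool :=
  t.fold (fun _ => true) (fun f bs => decide ((f, bs.length) ∈ sig) && decide (false ∉ bs))

@[simp] theorem wfb_var (sig : List (ℕ × ℕ)) (n : ℕ) : (var n).wfb sig = true := by simp [wfb]

@[simp] theorem wfb_app (sig : List (ℕ × ℕ)) (f : ℕ) (ts : List Term) :
    (app f ts).wfb sig = true ↔ (f, ts.length) ∈ sig ∧ ∀ t ∈ ts, t.wfb sig = true := by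
  simp [wfb]

theorem wfTerm_iff (sig : List (ℕ × ℕ)) (t : Term) : WFTerm sig t ↔ t.wfb sig = true := by
  induction t using ind with
  | hv m => simp [WFTerm.var]
  | ha f ts ih =>
    rw [wfb_app]
    constructor
    · rintro (_ | ⟨h, ht⟩); exact ⟨h, fun t h => (ih t h).1 (ht t h)⟩
    · rintro ⟨h, ht⟩; exact .app h fun t h => (ih t h).2 (ht t h)

theorem primrecPred_mem {α : Type} [Primcodable α] :
    PrimrecRel fun (a : α) (l : List α) => a ∈ l :=
  ((PrimrecRel.exists_mem_list (R := fun a b : α => a = b) Primrec.eq).comp .snd .fst).of_eq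
    fun p => by simp

theorem primrec_wfb : Primrec₂ wfb := by
  refine primrec_fold (v := fun _ _ => true)
    (a := fun (sig : List (ℕ × ℕ)) f bs =>
      decide ((f, bs.length) ∈ sig) && decide (false ∉ bs)) (.const true) ?_
  refine Primrec.and.comp ?_ ?_
  · exact (PrimrecRel.comp primrecPred_mem
      (.pair (Primrec.fst.comp .snd) (Primrec.list_length.comp (Primrec.snd.comp .snd)))
      .fst).decide
  · exact (PrimrecRel.comp primrecPred_mem (.const false) (Primrec.snd.comp .snd)).not.decide

/-! ### Reductions as finite data -/

/-- The substitution given by a list of terms: variable `n` goes to entry `n`, and variables beyond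
the end of the list are left unchanged. -/
def lsub (L : List Term) (n : ℕ) : Term := (L[n]?).getD (var n)

theorem subst_eq_fold (σ : ℕ → Term) (t : Term) : t.subst σ = t.fold σ app := by
  induction t using ind with
  | hv n => simp
  | ha f ts ih => simpa using ih

theorem primrec_lsubst : Primrec₂ fun (L : List Term) (t : Term) => t.subst (lsub L) := by
  simp only [subst_eq_fold]
  refine primrec_fold (v := lsub) (a := fun _ => app) ?_ ?_
  · exact Primrec.option_getD.comp (Primrec.list_getElem?.comp .fst .snd)
      (primrec_var.comp .snd)
  · exact primrec_app.comp (Primrec.fst.comp .snd) (Primrec.snd.comp .snd)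

/-- Only finitely many values of a substitution matter for a given term. -/
theorem exists_bound (t : Term) : ∃ N, ∀ σ τ : ℕ → Term, (∀ n < N, σ n = τ n) →
    t.subst σ = t.subst τ := by
  induction t using ind with
  | hv n => exact ⟨n + 1, fun σ τ h => by simpa using h n (by simp)⟩
  | ha f ts ih =>
    choose! N hN using ih
    refine ⟨(ts.map N).sum, fun σ τ h => ?_⟩
    rw [subst_app, subst_app]
    congr 1
    refine List.map_congr_left fun t ht => hN t ht σ τ fun n hn => h n (hn.trans_le ?_)
    exact List.single_le_sum (by simp) _ (List.mem_map_of_mem ht)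

/-- A one-hole context, as the list of its layers from the hole outwards. -/
abbrev Ctx := List (ℕ × List Term × List Term)

/-- Filling the hole of a context. -/
def plug (C : Ctx) (t : Term) : Term :=
  C.foldl (fun s x => app x.1 (x.2.1 ++ s :: x.2.2)) t

theorem primrec_plug : Primrec₂ plug := by
  refine Primrec.list_foldl (h := fun (_ : Ctx × Term) (y : Term × ℕ × List Term × List Term) =>
    app y.2.1 (y.2.2.1 ++ y.1 :: y.2.2.2)) .fst .snd ?_
  have h : Primrec fun z : (Ctx × Term) × Term × ℕ × List Term × List Term => z.2.2 :=
    Primrec.snd.comp .snd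
  exact primrec_app.comp (Primrec.fst.comp h)
    (Primrec.list_append.comp (Primrec.fst.comp (Primrec.snd.comp h))
      (Primrec.list_cons.comp (Primrec.fst.comp .snd) (Primrec.snd.comp (Primrec.snd.comp h))))

instance : DecidableEq Term := encode_injective.decidableEq

/-- The data determining a rewrite step: a context, a rule and a substitution. -/
abbrev Wit := Ctx × (Term × Term) × List Term

/-- Perform the step described by `w` on `t`; if `w` does not describe a step from `t`, do
nothing. -/
noncomputable def stepW (R : List (Term × Term)) (t : Term) (w : Wit) : Term :=
  bif decide (w.2.1 ∈ R) && (t == plug w.1 (w.2.1.1.subst (lsub w.2.2)))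
  then plug w.1 (w.2.1.2.subst (lsub w.2.2)) else t

/-- Perform a list of steps. -/
noncomputable def exec (R : List (Term × Term)) (t : Term) (ws : List Wit) : Term :=
  ws.foldl (stepW R) t

theorem primrec_exec :
    Primrec fun x : List (Term × Term) × Term × List Wit => exec x.1 x.2.1 x.2.2 := by
  refine Primrec.list_foldl (h := fun (x : List (Term × Term) × Term × List Wit)
    (y : Term × Wit) => stepW x.1 y.1 y.2) (Primrec.snd.comp .snd) (Primrec.fst.comp .snd) ?_
  have hR : Primrec fun z : (List (Term × Term) × Term × List Wit) × Term × Wit => z.1.1 :=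
    Primrec.fst.comp .fst
  have ht : Primrec fun z : (List (Term × Term) × Term × List Wit) × Term × Wit => z.2.1 :=
    Primrec.fst.comp .snd
  have hw : Primrec fun z : (List (Term × Term) × Term × List Wit) × Term × Wit => z.2.2 :=
    Primrec.snd.comp .snd
  have hC := Primrec.fst.comp hw
  have hr := Primrec.fst.comp (Primrec.snd.comp hw)
  have hL := Primrec.snd.comp (Primrec.snd.comp hw)
  refine Primrec.cond (Primrec.and.comp ?_ ?_) ?_ ht
  · exact (PrimrecRel.comp primrecPred_mem hr hR).decide
  · exact Primrec.beq.comp ht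
      (primrec_plug.comp hC (primrec_lsubst.comp hL (Primrec.fst.comp hr)))
  · exact primrec_plug.comp hC (primrec_lsubst.comp hL (Primrec.snd.comp hr))

theorem rewrite_plug {R : List (Term × Term)} {s t : Term} (h : Rewrite R s t) (C : Ctx) :
    Rewrite R (plug C s) (plug C t) := by
  induction C generalizing s t with
  | nil => exact h
  | cons x C ih => exact ih (.congr x.1 x.2.1 x.2.2 _ _ h)

/-- Every rewrite step is described by finite data. -/
theorem exists_stepW {R : List (Term × Term)} {s t : Term} (h : Rewrite R s t) :
    ∃ w, stepW R s w = t := by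
  suffices ∃ (C : Ctx) (l r : Term) (L : List Term), (l, r) ∈ R ∧
      s = plug C (l.subst (lsub L)) ∧ t = plug C (r.subst (lsub L)) by
    obtain ⟨C, l, r, L, hR, rfl, rfl⟩ := this
    exact ⟨(C, (l, r), L), by simp [stepW, hR]⟩
  induction h with
  | rule l r σ h =>
    obtain ⟨N, hN⟩ := exists_bound l
    obtain ⟨M, hM⟩ := exists_bound r
    refine ⟨[], l, r, (List.range (N + M)).map σ, h, hN _ _ ?_, hM _ _ ?_⟩ <;>
    · intro n hn
      have : n < N + M := by omega
      simp [lsub, this]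
  | congr f us vs s t _ ih =>
    obtain ⟨C, l, r, L, hR, rfl, rfl⟩ := ih
    exact ⟨C ++ [(f, us, vs)], l, r, L, hR, by simp [plug], by simp [plug]⟩

theorem reduces_stepW (R : List (Term × Term)) (t : Term) (w : Wit) :
    Reduces R t (stepW R t w) := by
  unfold stepW
  cases h : decide (w.2.1 ∈ R) && (t == plug w.1 (w.2.1.1.subst (lsub w.2.2))) with
  | false => exact .refl
  | true =>
    simp only [Bool.and_eq_true, decide_eq_true_eq, beq_iff_eq] at h
    obtain ⟨hR, ht⟩ := h
    rw [cond_true]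
    conv => arg 2; rw [ht]
    exact .single (rewrite_plug (.rule _ _ _ hR) _)

theorem reduces_iff (R : List (Term × Term)) (s t : Term) :
    Reduces R s t ↔ ∃ ws, exec R s ws = t := by
  constructor
  · intro h
    induction h with
    | refl => exact ⟨[], rfl⟩
    | tail _ h ih =>
      obtain ⟨ws, rfl⟩ := ih
      obtain ⟨w, rfl⟩ := exists_stepW h
      exact ⟨ws ++ [w], by simp [exec]⟩
  · rintro ⟨ws, rfl⟩
    induction ws generalizing s with
    | nil => exact .refl
    | cons w ws ih => exact (reduces_stepW R s w).trans (ih _)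

/-- Confluence in the form `∀ ∃` over finite data with a decidable matrix. -/
theorem crOn_iff (R : List (Term × Term)) (t : Term) :
    CRon R t ↔ ∀ a : List Wit × List Wit, ∃ b : List Wit × List Wit,
      exec R (exec R t a.1) b.1 = exec R (exec R t a.2) b.2 := by
  simp only [CRon, reduces_iff, Prod.forall, Prod.exists]
  constructor
  · intro h a₁ a₂
    obtain ⟨d, ⟨b₁, h₁⟩, b₂, h₂⟩ := h _ _ ⟨a₁, rfl⟩ ⟨a₂, rfl⟩
    exact ⟨b₁, b₂, h₁.trans h₂.symm⟩
  · rintro h _ _ ⟨a₁, rfl⟩ ⟨a₂, rfl⟩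
    obtain ⟨b₁, b₂, h⟩ := h a₁ a₂
    exact ⟨_, ⟨b₁, h⟩, b₂, rfl⟩

end Term

open Term

/-! ### Membership in `Π⁰₂` -/

theorem encodeTRS_eq (R : List (Term × Term)) : encodeTRS R = Encodable.encode R := by
  unfold encodeTRS
  induction R with
  | nil => rfl
  | cons p R ih =>
    simp only [List.map_cons, Encodable.encode_list_cons, ih]
    rfl

/-- The conditions on a rule in `WFTRS`, stated decidably; the code of a variable is the one with
first component zero. -/
def WFRule (p : Term × Term) (sig : List (ℕ × ℕ)) : Prop :=
  p.1.wfb sig = true ∧ p.2.wfb sig = true ∧ (Encodable.encode p.1).unpair.1 ≠ 0 ∧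
    ∀ n ∈ p.2.vars, n ∈ p.1.vars

theorem ne_var_iff (t : Term) : (∀ n, t ≠ .var n) ↔ (Encodable.encode t).unpair.1 ≠ 0 := by
  cases t <;> simp [encode_eq, encode_var, encode_app]

theorem wfTRS_iff (sig : List (ℕ × ℕ)) (R : List (Term × Term)) :
    WFTRS sig R ↔ WFSig sig ∧ ∀ p ∈ R, WFRule p sig := by
  simp only [WFTRS, WFRule, wfTerm_iff, ne_var_iff, isVarOf_iff]

theorem primrecPred_wfSig : PrimrecPred WFSig := by
  have h : PrimrecRel fun q p : ℕ × ℕ => p.1 = q.1 → p.2 = q.2 :=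
    ((PrimrecPred.not (Primrec.eq.comp (Primrec.fst.comp .snd) (Primrec.fst.comp .fst))).or
      (Primrec.eq.comp (Primrec.snd.comp .snd) (Primrec.snd.comp .fst))).of_eq
        fun p => by tauto
  have h₁ : PrimrecRel fun (p : ℕ × ℕ) (s : List (ℕ × ℕ)) => ∀ q ∈ s, p.1 = q.1 → p.2 = q.2 :=
    ((PrimrecRel.forall_mem_list h).comp .snd .fst)
  exact (PrimrecRel.forall_mem_list h₁).comp .id .id

theorem primrecRel_wfRule : PrimrecRel WFRule := by
  have h : PrimrecRel fun (l : List ℕ) (m : List ℕ) => ∀ n ∈ l, n ∈ m :=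
    PrimrecRel.forall_mem_list primrecPred_mem
  refine .and ?_ (.and ?_ (.and ?_ ?_))
  · exact Primrec.eq.comp (primrec_wfb.comp .snd (Primrec.fst.comp .fst)) (.const true)
  · exact Primrec.eq.comp (primrec_wfb.comp .snd (Primrec.snd.comp .fst)) (.const true)
  · exact (PrimrecRel.comp Primrec.eq (Primrec.fst.comp (Primrec.unpair.comp
      (Primrec.encode.comp (Primrec.fst.comp .fst)))) (.const 0)).not
  · exact h.comp (primrec_vars.comp (Primrec.snd.comp .fst))
      (primrec_vars.comp (Primrec.fst.comp .fst))

/-- The decidable part of membership: the system and the term are well formed and the term is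
ground. -/
def Static (x : List (ℕ × ℕ) × List (Term × Term) × Term) : Prop :=
  WFTRS x.1 x.2.1 ∧ WFTerm x.1 x.2.2 ∧ Ground x.2.2

theorem primrecPred_static : PrimrecPred Static := by
  have h : PrimrecPred fun x : List (ℕ × ℕ) × List (Term × Term) × Term =>
      (WFSig x.1 ∧ ∀ p ∈ x.2.1, WFRule p x.1) ∧ x.2.2.wfb x.1 = true ∧ x.2.2.vars = [] := by
    refine .and (.and ?_ ?_) (.and ?_ ?_)
    · exact primrecPred_wfSig.comp .fst
    · exact (PrimrecRel.forall_mem_list primrecRel_wfRule).comp (Primrec.fst.comp .snd) .fst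
    · exact Primrec.eq.comp (primrec_wfb.comp .fst (Primrec.snd.comp .snd)) (.const true)
    · exact Primrec.eq.comp (primrec_vars.comp (Primrec.snd.comp .snd)) (.const [])
  refine h.of_eq fun x => ?_
  simp only [Static, wfTRS_iff, wfTerm_iff, Ground, isVarOf_iff, List.eq_nil_iff_forall_not_mem]

/-- The set of codes of confluent pairs; the code records the signature along with the pair. -/
def crSet : Set ℕ :=
  { n : ℕ | ∃ (sig : List (ℕ × ℕ)) (R : List (Term × Term)) (t : Term),
      WFTRS sig R ∧ WFTerm sig t ∧ Ground t ∧
      n = Nat.pair (encodeSig sig) (Nat.pair (encodeTRS R) t.encode) ∧ CRon R t }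

theorem code_eq (sig : List (ℕ × ℕ)) (R : List (Term × Term)) (t : Term) :
    Nat.pair (encodeSig sig) (Nat.pair (encodeTRS R) t.encode) = Encodable.encode (sig, R, t) := by
  simp [encodeTRS_eq, encodeSig, encode_eq]

theorem encode_mem_crSet (x : List (ℕ × ℕ) × List (Term × Term) × Term) :
    Encodable.encode x ∈ crSet ↔ Static x ∧ CRon x.2.1 x.2.2 := by
  simp only [crSet, code_eq, Set.mem_ofPred_eq, Encodable.encode_inj]
  constructor
  · rintro ⟨sig, R, t, h₁, h₂, h₃, rfl, h⟩; exact ⟨⟨h₁, h₂, h₃⟩, h⟩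
  · rintro ⟨⟨h₁, h₂, h₃⟩, h⟩; exact ⟨_, _, _, h₁, h₂, h₃, rfl, h⟩

theorem pi02_crSet : Pi02 crSet := by
  obtain ⟨_, hS⟩ := primrecPred_static
  let X := List (ℕ × ℕ) × List (Term × Term) × Term
  let p : X → List Wit × List Wit → List Wit × List Wit → Bool := fun x a b =>
    decide (Static x) &&
      (exec x.2.1 (exec x.2.1 x.2.2 a.1) b.1 == exec x.2.1 (exec x.2.1 x.2.2 a.2) b.2)
  have hp : Primrec fun z : X × (List Wit × List Wit) × (List Wit × List Wit) =>
      p z.1 z.2.1 z.2.2 := by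
    have hR : Primrec fun z : X × (List Wit × List Wit) × (List Wit × List Wit) => z.1.2.1 :=
      Primrec.fst.comp (Primrec.snd.comp .fst)
    have ht : Primrec fun z : X × (List Wit × List Wit) × (List Wit × List Wit) => z.1.2.2 :=
      Primrec.snd.comp (Primrec.snd.comp .fst)
    have ha : Primrec fun z : X × (List Wit × List Wit) × (List Wit × List Wit) => z.2.1 :=
      Primrec.fst.comp .snd
    have hb : Primrec fun z : X × (List Wit × List Wit) × (List Wit × List Wit) => z.2.2 :=
      Primrec.snd.comp .snd
    refine Primrec.and.comp (hS.comp .fst) (Primrec.beq.comp ?_ ?_)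
    · exact primrec_exec.comp (.pair hR (.pair
        (primrec_exec.comp (.pair hR (.pair ht (Primrec.fst.comp ha)))) (Primrec.fst.comp hb)))
    · exact primrec_exec.comp (.pair hR (.pair
        (primrec_exec.comp (.pair hR (.pair ht (Primrec.snd.comp ha)))) (Primrec.snd.comp hb)))
  refine ⟨fun n a b => p (Denumerable.ofNat _ n) (Denumerable.ofNat _ a) (Denumerable.ofNat _ b),
    ?_, fun n => ?_⟩
  · exact (hp.comp (.pair ((Primrec.ofNat _).comp .fst) (.pair
      ((Primrec.ofNat _).comp (Primrec.fst.comp .snd))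
      ((Primrec.ofNat _).comp (Primrec.snd.comp .snd))))).to_comp
  · obtain ⟨x, rfl⟩ : ∃ x : X, n = Encodable.encode x :=
      ⟨Denumerable.ofNat X n, (Denumerable.encode_ofNat n).symm⟩
    have hs : Function.Surjective (Denumerable.ofNat (List Wit × List Wit)) := fun a =>
      ⟨Encodable.encode a, Denumerable.ofNat_encode a⟩
    have he : ∀ a, (∃ y, p x a (Denumerable.ofNat _ y) = true) ↔ ∃ b, p x a b = true :=
      fun a => (hs.exists (p := fun b => p x a b = true)).symm
    rw [encode_mem_crSet]
    simp only [Denumerable.ofNat_encode, he]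
    rw [← hs.forall (p := fun a => ∃ b, p x a b = true), crOn_iff]
    simp only [p, Bool.and_eq_true, decide_eq_true_eq, beq_iff_eq]
    constructor
    · rintro ⟨h, h'⟩ a
      obtain ⟨b, hb⟩ := h' a
      exact ⟨b, h, hb⟩
    · intro h
      exact ⟨(h default).choose_spec.1, fun a => (h a).imp fun _ hb => hb.2⟩

/-! ### A machine without recursion in its steps -/

open Turing.ToPartrec StateTransition

namespace Machine

/-- Configurations of a small-step machine evaluating a `Turing.ToPartrec.Code`: evaluate a code
in a continuation, return a value to a continuation, or be finished. -/
inductive MCfg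
  | run : Code → Cont → List ℕ → MCfg
  | ret : Cont → List ℕ → MCfg
  | done : MCfg

open MCfg

/-- One step of the machine. Unlike `Turing.ToPartrec.step`, it does no recursion on codes or
continuations, so that one machine step is one rewrite step. -/
def mstep : MCfg → Option MCfg
  | run .zero' k v => some (ret k (0 :: v))
  | run .succ k v => some (ret k [v.headI.succ])
  | run .tail k v => some (ret k v.tail)
  | run (.cons f g) k v => some (run f (.cons₁ g v k) v)
  | run (.comp f g) k v => some (run g (.comp f k) v)
  | run (.case f g) k v => some (v.headI.rec (run f k v.tail) fun y _ => run g k (y :: v.tail))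
  | run (.fix f) k v => some (run f (.fix f k) v)
  | ret .halt _ => some done
  | ret (.cons₁ g as k) v => some (run g (.cons₂ v k) as)
  | ret (.cons₂ ns k) v => some (ret k (ns.headI :: v))
  | ret (.comp f k) v => some (run f k v)
  | ret (.fix f k) v =>
      some (if v.headI = 0 then ret k v.tail else run f (.fix f k) v.tail)
  | done => none

/-- Mathlib's configurations as configurations of `mstep`; the final value is dropped, since only
halting matters. -/
def tr : Cfg → MCfg
  | .halt _ => done
  | .ret k v => ret k v

theorem reaches_stepNormal (c : Code) (k : Cont) (v : List ℕ) :
    Reaches mstep (run c k v) (tr (stepNormal c k v)) := by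
  induction c generalizing k v with
  | zero' => exact .single rfl
  | succ => exact .single rfl
  | tail => exact .single rfl
  | cons f g ihf ihg => exact .head rfl (ihf _ _)
  | comp f g ihf ihg => exact .head rfl (ihg _ _)
  | case f g ihf ihg =>
    refine .head rfl ?_
    simp only [stepNormal]
    cases v.headI with
    | zero => exact ihf _ _
    | succ y => exact ihg _ _
  | fix f ih => exact .head rfl (ih _ _)

theorem reaches_stepRet (k : Cont) (v : List ℕ) :
    Reaches₁ mstep (ret k v) (tr (stepRet k v)) := by
  induction k generalizing v with
  | halt => exact .single rfl
  | cons₁ g as k ih => exact .head' rfl (reaches_stepNormal _ _ _)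
  | cons₂ ns k ih => exact .head rfl (ih _)
  | comp f k ih => exact .head' rfl (reaches_stepNormal _ _ _)
  | fix f k ih =>
    by_cases h : v.headI = 0
    · refine .head (b := ret k v.tail) (by simp [mstep, h]) ?_
      rw [stepRet, if_pos h]
      exact ih v.tail
    · refine .head' (b := run f (.fix f k) v.tail) (by simp [mstep, h]) ?_
      rw [stepRet, if_neg h]
      exact reaches_stepNormal f (.fix f k) v.tail

/-- The small-step machine halts exactly when the code is defined. -/
theorem eval_mstep_dom (c : Code) (v : List ℕ) :
    (eval mstep (run c .halt v)).Dom ↔ (c.eval v).Dom := by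
  have H : Respects step mstep fun a b => tr a = b := by
    rw [fun_respects]
    intro a
    cases a with
    | halt v => rfl
    | ret k v => exact reaches_stepRet k v
  rw [reaches_eval (reaches_stepNormal c .halt v), tr_eval_dom H rfl, stepNormal_eval]
  rfl

/-! ### The rewrite system -/

/-- The numeral zero. -/
abbrev tZ : Term := .app 0 []
/-- The successor of a numeral. -/
abbrev tS (a : Term) : Term := .app 1 [a]
/-- The empty list. -/
abbrev tNil : Term := .app 2 []
/-- Adjoining an element at the front of a list. -/
abbrev tCons (a b : Term) : Term := .app 3 [a, b]
/-- Evaluation of a code in a continuation. -/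
abbrev tNorm (c k v : Term) : Term := .app 16 [c, k, v]
/-- Return of a value to a continuation. -/
abbrev tRet (k v : Term) : Term := .app 17 [k, v]
/-- The final state. -/
abbrev tDone : Term := .app 18 []
/-- The state for the code `c` and the input `n` in which the guess `x` may still be incremented. -/
abbrev tPick (c n x : Term) : Term := .app 19 [c, n, x]

/-- Numerals as terms. -/
def numT : ℕ → Term
  | 0 => tZ
  | n + 1 => tS (numT n)

/-- Lists of numbers as terms. -/
def listT : List ℕ → Term
  | [] => tNil
  | n :: l => tCons (numT n) (listT l)

/-- Codes as terms. -/
def codeT : Code → Term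
  | .zero' => .app 4 []
  | .succ => .app 5 []
  | .tail => .app 6 []
  | .cons f g => .app 7 [codeT f, codeT g]
  | .comp f g => .app 8 [codeT f, codeT g]
  | .case f g => .app 9 [codeT f, codeT g]
  | .fix f => .app 10 [codeT f]

/-- Continuations as terms. -/
def contT : Cont → Term
  | .halt => .app 11 []
  | .cons₁ g v k => .app 12 [codeT g, listT v, contT k]
  | .cons₂ v k => .app 13 [listT v, contT k]
  | .comp f k => .app 14 [codeT f, contT k]
  | .fix f k => .app 15 [codeT f, contT k]

/-- Configurations as terms. -/
def cfgT : MCfg → Term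
  | run c k v => tNorm (codeT c) (contT k) (listT v)
  | ret k v => tRet (contT k) (listT v)
  | done => tDone

/-- The signature: symbols `0`–`15` are constructors, `16`–`19` are states. -/
def sig : List (ℕ × ℕ) :=
  [(0, 0), (1, 1), (2, 0), (3, 2), (4, 0), (5, 0), (6, 0), (7, 2), (8, 2), (9, 2), (10, 1),
   (11, 0), (12, 3), (13, 2), (14, 2), (15, 2), (16, 3), (17, 2), (18, 0), (19, 3)]

/-- A fixed rewrite system. The rules for `tNorm` and `tRet` interpret arbitrary codes, following
`mstep`; the last three let `tPick` increment its guess, start the evaluation of the code on the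
input and the guess, or stop immediately. -/
def rules : List (Term × Term) :=
  let k : Term := .var 0
  let v : Term := .var 1
  let a : Term := .var 2
  let f : Term := .var 3
  let g : Term := .var 4
  [(tNorm (.app 4 []) k v, tRet k (tCons tZ v)),
   (tNorm (.app 5 []) k tNil, tRet k (tCons (tS tZ) tNil)),
   (tNorm (.app 5 []) k (tCons a v), tRet k (tCons (tS a) tNil)),
   (tNorm (.app 6 []) k tNil, tRet k tNil),
   (tNorm (.app 6 []) k (tCons a v), tRet k v),
   (tNorm (.app 7 [f, g]) k v, tNorm f (.app 12 [g, v, k]) v),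
   (tNorm (.app 8 [f, g]) k v, tNorm g (.app 14 [f, k]) v),
   (tNorm (.app 9 [f, g]) k tNil, tNorm f k tNil),
   (tNorm (.app 9 [f, g]) k (tCons tZ v), tNorm f k v),
   (tNorm (.app 9 [f, g]) k (tCons (tS a) v), tNorm g k (tCons a v)),
   (tNorm (.app 10 [f]) k v, tNorm f (.app 15 [f, k]) v),
   (tRet (.app 11 []) v, tDone),
   (tRet (.app 12 [g, a, k]) v, tNorm g (.app 13 [v, k]) a),
   (tRet (.app 13 [tNil, k]) v, tRet k (tCons tZ v)),
   (tRet (.app 13 [tCons a f, k]) v, tRet k (tCons a v)),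
   (tRet (.app 14 [f, k]) v, tNorm f k v),
   (tRet (.app 15 [f, k]) tNil, tRet k tNil),
   (tRet (.app 15 [f, k]) (tCons tZ v), tRet k v),
   (tRet (.app 15 [f, k]) (tCons (tS a) v), tNorm f (.app 15 [f, k]) v),
   (tPick f a v, tPick f a (tS v)),
   (tPick f a v, tNorm f (.app 11 []) (tCons a (tCons v tNil))),
   (tPick f a v, tDone)]

/-- Terms built from constructor symbols only. -/
inductive Ctor : Term → Prop
  | app {f : ℕ} {ts : List Term} : f < 16 → (∀ t ∈ ts, Ctor t) → Ctor (.app f ts)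

theorem ctor_numT (n : ℕ) : Ctor (numT n) := by
  induction n with
  | zero => exact .app (by simp) (by simp)
  | succ n ih => exact .app (by simp) (by simpa using ih)

theorem ctor_listT (l : List ℕ) : Ctor (listT l) := by
  induction l with
  | nil => exact .app (by simp) (by simp)
  | cons n l ih => exact .app (by simp) (by simpa using ⟨ctor_numT n, ih⟩)

theorem ctor_codeT (c : Code) : Ctor (codeT c) := by
  induction c <;> exact .app (by simp) (by simp [*])

theorem ctor_contT (k : Cont) : Ctor (contT k) := by
  induction k <;> exact .app (by simp) (by simp [*, ctor_codeT, ctor_listT])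

theorem lhs_root {l r : Term} (h : (l, r) ∈ rules) : ∃ f ts, l = .app f ts ∧ 16 ≤ f := by
  simp only [rules, List.mem_cons, Prod.mk.injEq, List.not_mem_nil, or_false] at h
  rcases h with h | h | h | h | h | h | h | h | h | h | h | h | h | h | h | h | h | h | h | h |
      h | h <;>
    exact ⟨_, _, h.1, by simp⟩

theorem Ctor.not_rewrite {t u : Term} (ht : Ctor t) : ¬ Rewrite rules t u := by
  intro h
  induction h with
  | rule l r σ h =>
    obtain ⟨f, ts, rfl, hf⟩ := lhs_root h
    rw [Term.subst_app] at ht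
    cases ht with
    | app h _ => omega
  | congr f us vs t t' _ ih =>
    cases ht with
    | app _ h => exact ih (h t (by simp))

/-- Under a state symbol with constructor arguments only root steps are possible. -/
theorem root_of_rewrite {f : ℕ} {ts : List Term} {u : Term} (hts : ∀ t ∈ ts, Ctor t)
    (h : Rewrite rules (.app f ts) u) :
    ∃ l r σ, (l, r) ∈ rules ∧ Term.app f ts = l.subst σ ∧ u = r.subst σ := by
  generalize hs : Term.app f ts = s at h
  cases h with
  | rule l r σ h => exact ⟨l, r, σ, h, rfl, rfl⟩
  | congr g us vs t t' h =>
    injection hs with _ hs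
    exact absurd h (hts t (by simp [hs])).not_rewrite

/-- Applying the `i`-th rule at the root, with the substitution given by a list. -/
theorem rewrite_rule (i : ℕ) (L : List Term) {p : Term × Term} (h : rules[i]? = some p) :
    Rewrite rules (p.1.subst (Term.lsub L)) (p.2.subst (Term.lsub L)) :=
  .rule _ _ _ (List.mem_of_getElem? h)

theorem rewrite_pick_succ (c n x : Term) : Rewrite rules (tPick c n x) (tPick c n (tS x)) := by
  simpa [Term.lsub] using rewrite_rule 19 [c, x, n, c] rfl

theorem rewrite_pick_norm (c n x : Term) :
    Rewrite rules (tPick c n x) (tNorm c (.app 11 []) (tCons n (tCons x tNil))) := by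
  simpa [Term.lsub] using rewrite_rule 20 [c, x, n, c] rfl

theorem rewrite_pick_done (c n x : Term) : Rewrite rules (tPick c n x) tDone := by
  simpa [Term.lsub] using rewrite_rule 21 [c, x, n, c] rfl

theorem rewrite_of_mstep {m m' : MCfg} (h : mstep m = some m') :
    Rewrite rules (cfgT m) (cfgT m') := by
  match m, h with
  | run .zero' k v, rfl =>
    simpa [Term.lsub, cfgT, codeT, contT, listT, numT] using rewrite_rule 0 [contT k, listT v] rfl
  | run .succ k [], rfl =>
    simpa [Term.lsub, cfgT, codeT, contT, listT, numT] using rewrite_rule 1 [contT k] rfl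
  | run .succ k (a :: v), rfl =>
    simpa [Term.lsub, cfgT, codeT, contT, listT, numT] using
      rewrite_rule 2 [contT k, listT v, numT a] rfl
  | run .tail k [], rfl =>
    simpa [Term.lsub, cfgT, codeT, contT, listT, numT] using rewrite_rule 3 [contT k] rfl
  | run .tail k (a :: v), rfl =>
    simpa [Term.lsub, cfgT, codeT, contT, listT, numT] using
      rewrite_rule 4 [contT k, listT v, numT a] rfl
  | run (.cons f g) k v, rfl =>
    simpa [Term.lsub, cfgT, codeT, contT, listT, numT] using
      rewrite_rule 5 [contT k, listT v, tZ, codeT f, codeT g] rfl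
  | run (.comp f g) k v, rfl =>
    simpa [Term.lsub, cfgT, codeT, contT, listT, numT] using
      rewrite_rule 6 [contT k, listT v, tZ, codeT f, codeT g] rfl
  | run (.case f g) k [], rfl =>
    simpa [Term.lsub, cfgT, codeT, contT, listT, numT] using
      rewrite_rule 7 [contT k, tZ, tZ, codeT f, codeT g] rfl
  | run (.case f g) k (0 :: v), rfl =>
    simpa [Term.lsub, cfgT, codeT, contT, listT, numT] using
      rewrite_rule 8 [contT k, listT v, tZ, codeT f, codeT g] rfl
  | run (.case f g) k ((a + 1) :: v), rfl =>
    simpa [Term.lsub, cfgT, codeT, contT, listT, numT] using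
      rewrite_rule 9 [contT k, listT v, numT a, codeT f, codeT g] rfl
  | run (.fix f) k v, rfl =>
    simpa [Term.lsub, cfgT, codeT, contT, listT, numT] using
      rewrite_rule 10 [contT k, listT v, tZ, codeT f] rfl
  | ret .halt v, rfl =>
    simpa [Term.lsub, cfgT, codeT, contT, listT, numT] using rewrite_rule 11 [tZ, listT v] rfl
  | ret (.cons₁ g a k) v, rfl =>
    simpa [Term.lsub, cfgT, codeT, contT, listT, numT] using
      rewrite_rule 12 [contT k, listT v, listT a, tZ, codeT g] rfl
  | ret (.cons₂ [] k) v, rfl =>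
    simpa [Term.lsub, cfgT, codeT, contT, listT, numT] using rewrite_rule 13 [contT k, listT v] rfl
  | ret (.cons₂ (a :: w) k) v, rfl =>
    simpa [Term.lsub, cfgT, codeT, contT, listT, numT] using
      rewrite_rule 14 [contT k, listT v, numT a, listT w] rfl
  | ret (.comp f k) v, rfl =>
    simpa [Term.lsub, cfgT, codeT, contT, listT, numT] using
      rewrite_rule 15 [contT k, listT v, tZ, codeT f] rfl
  | ret (.fix f k) [], rfl =>
    simpa [Term.lsub, cfgT, codeT, contT, listT, numT] using
      rewrite_rule 16 [contT k, tZ, tZ, codeT f] rfl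
  | ret (.fix f k) (0 :: v), rfl =>
    simpa [Term.lsub, cfgT, codeT, contT, listT, numT] using
      rewrite_rule 17 [contT k, listT v, tZ, codeT f] rfl
  | ret (.fix f k) ((a + 1) :: v), rfl =>
    simpa [Term.lsub, cfgT, codeT, contT, listT, numT] using
      rewrite_rule 18 [contT k, listT v, numT a, codeT f] rfl

/-- Rewriting a configuration is exactly running the machine: the right constructor symbols at
the argument positions let at most one rule match, and it is the one performing the step. -/
theorem cfgT_rewrite {m : MCfg} {u : Term} (h : Rewrite rules (cfgT m) u) :
    ∃ m', mstep m = some m' ∧ u = cfgT m' := by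
  obtain ⟨l, r, σ, hR, hl, rfl⟩ : ∃ l r σ, (l, r) ∈ rules ∧ cfgT m = l.subst σ ∧
      u = r.subst σ := by
    cases m with
    | run c k v =>
      exact root_of_rewrite (by simp [ctor_codeT, ctor_contT, ctor_listT]) h
    | ret k v => exact root_of_rewrite (by simp [ctor_contT, ctor_listT]) h
    | done => exact root_of_rewrite (by simp) h
  simp only [rules, List.mem_cons, Prod.mk.injEq, List.not_mem_nil, or_false] at hR
  rcases m with ⟨c, k, _ | ⟨_ | n, v⟩⟩ |
      ⟨_ | ⟨g, a, k⟩ | ⟨_ | ⟨a, w⟩, k⟩ | ⟨f, k⟩ | ⟨f, k⟩, _ | ⟨_ | n, v⟩⟩ | _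
  any_goals cases c
  all_goals
    rcases hR with h | h | h | h | h | h | h | h | h | h | h | h | h | h | h | h | h | h | h | h |
        h | h <;>
      obtain ⟨rfl, rfl⟩ := h <;> simp_all [cfgT, codeT, contT, listT, numT, mstep]

theorem tPick_rewrite {c n x u : Term} (hc : Ctor c) (hn : Ctor n) (hx : Ctor x)
    (h : Rewrite rules (tPick c n x) u) :
    u = tPick c n (tS x) ∨ u = tNorm c (.app 11 []) (tCons n (tCons x tNil)) ∨ u = tDone := by
  obtain ⟨l, r, σ, hR, hl, rfl⟩ := root_of_rewrite (by simp [hc, hn, hx]) h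
  simp only [rules, List.mem_cons, Prod.mk.injEq, List.not_mem_nil, or_false] at hR
  rcases hR with h | h | h | h | h | h | h | h | h | h | h | h | h | h | h | h | h | h | h | h |
      h | h <;>
    obtain ⟨rfl, rfl⟩ := h <;> simp_all

/-! ### Confluence on the initial term -/

theorem reduces_of_reaches {m m' : MCfg} (h : Reaches mstep m m') :
    Reduces rules (cfgT m) (cfgT m') := by
  induction h with
  | refl => exact .refl
  | tail _ h ih => exact ih.tail (rewrite_of_mstep h)

theorem reaches_of_reduces {m : MCfg} {u : Term} (h : Reduces rules (cfgT m) u) :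
    ∃ m', Reaches mstep m m' ∧ u = cfgT m' := by
  induction h with
  | refl => exact ⟨m, .refl, rfl⟩
  | tail _ h ih =>
    obtain ⟨m', hm, rfl⟩ := ih
    obtain ⟨m₂, hs, rfl⟩ := cfgT_rewrite h
    exact ⟨m₂, hm.tail hs, rfl⟩

theorem mstep_eq_none {m : MCfg} (h : mstep m = none) : m = done := by
  rcases m with ⟨_, _, _⟩ | ⟨_, _⟩ | _
  case done => rfl
  case run c k v => cases c <;> simp [mstep] at h
  case ret k v => cases k <;> simp [mstep] at h

theorem eval_dom_iff (m : MCfg) : (eval mstep m).Dom ↔ Reaches mstep m done := by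
  constructor
  · intro h
    obtain ⟨h, h'⟩ := mem_eval.1 (Part.get_mem h)
    rwa [mstep_eq_none h'] at h
  · intro h
    exact Part.dom_iff_mem.2 ⟨done, mem_eval.2 ⟨h, rfl⟩⟩

/-- Halting of the machine is reachability of `tDone`. -/
theorem eval_dom_iff_reduces (m : MCfg) :
    (eval mstep m).Dom ↔ Reduces rules (cfgT m) tDone := by
  rw [eval_dom_iff]
  refine ⟨reduces_of_reaches, fun h => ?_⟩
  obtain ⟨m', h, h'⟩ := reaches_of_reduces h
  cases m' with
  | done => exact h
  | run c k v => simp [cfgT] at h'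
  | ret k v => simp [cfgT] at h'

/-- The initial term: the state guessing a number, starting from zero, in order to run the code
`c` on `n` and the guess. -/
def tStart (c : Code) (n : ℕ) : Term := tPick (codeT c) (numT n) tZ

theorem reduces_tStart_pick (c : Code) (n x : ℕ) :
    Reduces rules (tStart c n) (tPick (codeT c) (numT n) (numT x)) := by
  induction x with
  | zero => exact .refl
  | succ x ih => exact ih.tail (rewrite_pick_succ _ _ _)

/-- Every reduct of the initial term is still guessing, has stopped, or runs the code on a guess. -/
theorem reduct_tStart {c : Code} {n : ℕ} {u : Term} (h : Reduces rules (tStart c n) u) :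
    (∃ x, u = tPick (codeT c) (numT n) (numT x)) ∨
      ∃ m, u = cfgT m ∧ (m = done ∨ ∃ x, Reaches mstep (run c .halt [n, x]) m) := by
  induction h with
  | refl => exact .inl ⟨0, rfl⟩
  | tail _ h ih =>
    rcases ih with ⟨x, rfl⟩ | ⟨m, rfl, hm⟩
    · rcases tPick_rewrite (ctor_codeT c) (ctor_numT n) (ctor_numT x) h with rfl | rfl | rfl
      · exact .inl ⟨x + 1, rfl⟩
      · exact .inr ⟨run c .halt [n, x], rfl, .inr ⟨x, .refl⟩⟩
      · exact .inr ⟨done, rfl, .inl rfl⟩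
    · obtain ⟨m', hs, rfl⟩ := cfgT_rewrite h
      refine .inr ⟨m', rfl, .inr ?_⟩
      rcases hm with rfl | ⟨x, hx⟩
      · cases hs
      · exact ⟨x, hx.tail hs⟩

/-- Confluence on the initial term says that the code halts on every guess: stopping immediately
yields the normal form `tDone`, so confluence means that every reduct reaches `tDone`. -/
theorem crOn_tStart (c : Code) (n : ℕ) :
    CRon rules (tStart c n) ↔ ∀ x, (c.eval [n, x]).Dom := by
  simp only [← eval_mstep_dom]
  constructor
  · intro h x
    have h₁ : Reduces rules (tStart c n) (cfgT (run c .halt [n, x])) :=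
      (reduces_tStart_pick c n x).tail (rewrite_pick_norm _ _ _)
    obtain ⟨d, hd, hd'⟩ := h _ _ h₁ (.single (rewrite_pick_done _ _ _))
    -- `tDone` is a normal form, so it is the only possible common reduct.
    obtain ⟨m, hm, rfl⟩ := reaches_of_reduces (m := done) hd'
    have : m = done := by
      rcases hm.cases_head with h | ⟨b, hb, _⟩
      · exact h.symm
      · cases hb
    rw [eval_dom_iff_reduces]
    rwa [this] at hd
  · intro h
    have key : ∀ u, Reduces rules (tStart c n) u → Reduces rules u tDone := by
      intro u hu
      rcases reduct_tStart hu with ⟨x, rfl⟩ | ⟨m, rfl, rfl | ⟨x, hm⟩⟩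
      · exact .single (rewrite_pick_done _ _ _)
      · exact .refl
      · rw [← eval_dom_iff_reduces, ← reaches_eval hm]
        exact h x
    exact fun t₁ t₂ h₁ h₂ => ⟨tDone, key _ h₁, key _ h₂⟩

/-! ### The reduction -/

theorem wfRule_rules : ∀ p ∈ rules, WFRule p sig := by
  simp [rules, WFRule, sig, vars, encode_eq, encode_app]

theorem wfb_codeT (c : Code) : (codeT c).wfb sig = true := by
  induction c <;> simp_all [codeT, sig]

theorem vars_codeT (c : Code) : (codeT c).vars = [] := by
  induction c <;> simp_all [codeT, vars]

theorem wfb_numT (n : ℕ) : (numT n).wfb sig = true := by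
  induction n <;> simp_all [numT, sig]

theorem vars_numT (n : ℕ) : (numT n).vars = [] := by
  induction n <;> simp_all [numT, vars]

theorem static_tStart (c : Code) (n : ℕ) : Static (sig, rules, tStart c n) := by
  refine ⟨(wfTRS_iff _ _).2 ⟨?_, wfRule_rules⟩, ?_, ?_⟩
  · change ∀ p ∈ sig, ∀ q ∈ sig, p.1 = q.1 → p.2 = q.2
    decide
  · have h₁ := wfb_codeT c
    have h₂ := wfb_numT n
    rw [wfTerm_iff]
    simp [tStart, sig] at *
    exact ⟨h₁, h₂⟩
  · have h₁ := vars_codeT c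
    have h₂ := vars_numT n
    intro n
    rw [isVarOf_iff]
    simp only [vars] at *
    simp [tStart, h₁, h₂]

theorem primrec_numT : Primrec numT := by
  refine (Primrec.nat_rec₁ (f := fun _ t => tS t) tZ ?_).of_eq fun n => ?_
  · exact primrec_app.comp (.const 1) (Primrec.list_cons.comp .snd (.const []))
  · induction n with
    | zero => rfl
    | succ n ih => simp only [numT, ← ih]

theorem primrec_tStart (c : Code) : Primrec (tStart c) :=
  primrec_app.comp (.const 19) (Primrec.list_cons.comp (.const _)
    (Primrec.list_cons.comp primrec_numT (.const _)))

/-- The existential quantifier over `y` is the halting of a code on the inputs `n` and `x`. -/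
theorem exists_code_search {p : ℕ → ℕ → ℕ → Bool}
    (hp : Computable fun x : ℕ × ℕ × ℕ => p x.1 x.2.1 x.2.2) :
    ∃ c : Code, ∀ n x, (c.eval [n, x]).Dom ↔ ∃ y, p n x y = true := by
  let f : ℕ → ℕ →. ℕ := fun n x => Nat.rfind fun y => Part.some (p n x y)
  have hf : Partrec₂ f := by
    refine Partrec.rfind ?_
    exact (hp.comp (.pair (Computable.fst.comp .fst)
      (.pair (Computable.snd.comp .fst) .snd))).partrec
  obtain ⟨c, hc⟩ := Code.exists_code (Nat.Partrec'.part_iff₂.2 hf)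
  refine ⟨c, fun n x => ?_⟩
  have := hc (n ::ᵥ x ::ᵥ List.Vector.nil)
  have e : c.eval [n, x] = pure <$> f n x := this
  rw [e]
  change (Nat.rfind fun y => Part.some (p n x y)).Dom ↔ _
  refine Nat.rfind_dom.trans ?_
  exact ⟨fun ⟨y, hy, _⟩ => ⟨y, (Part.mem_some_iff.1 hy).symm⟩,
    fun ⟨y, hy⟩ => ⟨y, Part.mem_some_iff.2 hy.symm, fun _ => trivial⟩⟩

/-- The pairs `(rules, tStart c n)`, for one fixed code `c` searching for `y`, reduce a `Π⁰₂` set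
to `crSet`. -/
theorem pi02_red (B : Set ℕ) (hB : Pi02 B) : ManyOneRed B crSet := by
  obtain ⟨p, hp, hB⟩ := hB
  obtain ⟨c, hc⟩ := exists_code_search hp
  refine ⟨fun n => Encodable.encode (sig, rules, tStart c n), ?_, fun n => ?_⟩
  · exact (Primrec.encode.comp ((Primrec.const sig).pair
      ((Primrec.const rules).pair (primrec_tStart c)))).to_comp
  · rw [encode_mem_crSet, crOn_tStart, hB]
    simp only [hc]
    exact ⟨fun h => ⟨static_tStart c n, h⟩, fun h => h.2⟩

end Machine

/-- Confluence of a finite TRS on a single ground term is Π⁰₂-complete. -/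
theorem cr_single_ground_term_Pi02Complete :
    Pi02Complete { n : ℕ | ∃ (sig : List (ℕ × ℕ)) (R : List (Term × Term)) (t : Term),
      WFTRS sig R ∧ WFTerm sig t ∧ Ground t ∧ n = Nat.pair (encodeSig sig) (Nat.pair (encodeTRS R) t.encode) ∧
      CRon R t } := by
  exact ⟨pi02_crSet, Machine.pi02_red⟩
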